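/- Fix γ > 0, b₁ ∈ ℝ and set b₂ = 1 − b₁. Let A : ℝ² → ℂ and u : ℝ² → ℂ be smooth (infinitely differentiable) and fix (x, z) ∈ ℝ². For j ∈ {−2, −1, 0, 1, 2} define the point-weighted values ûⱼ(x, z; h): û₋₂ = b₁·u(x−2h, z) + (b₂/2)·[u(x−2h, z+2γh) + u(x−2h, z−2γh) − u(x, z−2γh) − u(x, z+2γh)]; û₋₁ = b₁·u(x−h, z) + (b₂/2)·[u(x−h, z+γh) + u(x−h, z−γh) − u(x, z−γh) − u(x, z+γh)]; û₀ = b₁·u(x, z); û₁ = b₁·u(x+h, z) + (b₂/2)·[u(x+h, z−γh) + u(x+h, z+γh) − u(x, z+γh) − u(x, z−γh)]; û₂ = b₁·u(x+2h, z) + (b₂/2)·[u(x+2h, z−2γh) + u(x+2h, z+2γh) − u(x, z+2γh) − u(x, z−2γh)]. Define L̃ₓu(x, z; h) = (1/h²)·[ −(9/8)·A(x−h/2, z)·((1/24)û₋₂ − (9/8)û₋₁ + (9/8)û₀ − (1/24)û₁) + (1/24)·A(x−3h/2, z)·(−(11/12)û₋₂ + (17/24)û₋₁ + (3/8)û₀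 − (5/24)û₁ + (1/24)û₂) − (1/24)·A(x+3h/2, z)·(−(1/24)û₋₂ + (5/24)û₋₁ − (3/8)û₀ − (17/24)û₁ + (11/12)û₂) + (9/8)·A(x+h/2, z)·((1/24)û₋₁ − (9/8)û₀ + (9/8)û₁ − (1/24)û₂) ]. Then L̃ₓu(x, z; h) = ∂/∂x(A·∂u/∂x)(x, z) + O(h⁴) as h → 0⁺. -/

import Mathlib

noncomputable section

/-- Point-weighted value `û` at the point `(xo, z)` relative to the center column `xc`,
with vertical half-width `s`:
`b₁·u(xo,z) + (b₂/2)·[u(xo,z+s) + u(xo,z−s) − u(xc,z−s) − u(xc,z+s)]` where `b₂ = 1 − b₁`. -/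
def hatVal (b₁ : ℝ) (u : ℝ × ℝ → ℂ) (xo xc z s : ℝ) : ℂ :=
  (b₁ : ℂ) * u (xo, z) + (((1 : ℂ) - (b₁ : ℂ)) / 2) *
    (u (xo, z + s) + u (xo, z - s) - u (xc, z - s) - u (xc, z + s))

/-- The fourth-order flux-form stencil applied to values `vm2, …, vp2`
with coefficient values `Am32, Am12, Ap12, Ap32` and step `h`. -/
def fluxStencil (Am32 Am12 Ap12 Ap32 vm2 vm1 v0 vp1 vp2 : ℂ) (h : ℝ) : ℂ :=
  (1 / (h : ℂ) ^ 2) *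
    ( -(9 / 8) * Am12 * ((1 / 24) * vm2 - (9 / 8) * vm1 + (9 / 8) * v0 - (1 / 24) * vp1)
      + (1 / 24) * Am32 * (-(11 / 12) * vm2 + (17 / 24) * vm1 + (3 / 8) * v0
          - (5 / 24) * vp1 + (1 / 24) * vp2)
      - (1 / 24) * Ap32 * (-(1 / 24) * vm2 + (5 / 24) * vm1 - (3 / 8) * v0
          - (17 / 24) * vp1 + (11 / 12) * vp2)
      + (9 / 8) * Ap12 * ((1 / 24) * vm1 - (9 / 8) * v0 + (9 / 8) * vp1 - (1 / 24) * vp2) )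

/-- The x-part `L̃ₓ` of the optimal point-weighting 17-point scheme. -/
def LxTilde (b₁ γ : ℝ) (A u : ℝ × ℝ → ℂ) (x z h : ℝ) : ℂ :=
  fluxStencil (A (x - 3 * h / 2, z)) (A (x - h / 2, z)) (A (x + h / 2, z))
    (A (x + 3 * h / 2, z))
    (hatVal b₁ u (x - 2 * h) x z (2 * γ * h)) (hatVal b₁ u (x - h) x z (γ * h))
    ((b₁ : ℂ) * u (x, z))
    (hatVal b₁ u (x + h) x z (γ * h)) (hatVal b₁ u (x + 2 * h) x z (2 * γ * h)) h

/-!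
The five weighted values are samples `g (jh)` of one smooth curve
`g t = b₁ u(x+t,z) + (b₂/2) [u(x+t,z+γt) + u(x+t,z-γt) - u(x,z-γt) - u(x,z+γt)]`, whose first two
derivatives at `0` are `∂ₓu` and `∂ₓ²u`, because `D²u` obeys the parallelogram law. With
`a t = A(x+t,z)`, the quantity `h² L̃ₓu` is a bilinear expression in the samples of `a` and `g`, so
by the Leibniz rule its Taylor coefficients in `h` are the moments of the weights times products of
derivatives of `a` and `g`. All moments of total order below six vanish except those producing
`h² (a' g' + a g'')`; dividing by `h²` leaves an `O(h⁴)` error.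
-/

open Asymptotics Filter Topology

theorem exists_bound_Ioo_of_isBigO_pow {E : Type*} [NormedAddCommGroup E] {f : ℝ → E}
    {n : ℕ} (hf : f =O[𝓝[>] 0] fun h ↦ h ^ n) :
    ∃ C δ : ℝ, 0 < C ∧ 0 < δ ∧ ∀ h : ℝ, 0 < h → h < δ → ‖f h‖ ≤ C * h ^ n := by
  obtain ⟨C, hC, hbound⟩ := hf.exists_pos
  obtain ⟨δ, hδ, hIoo⟩ := mem_nhdsGT_iff_exists_Ioo_subset.1 hbound.bound
  refine ⟨C, δ, hC, hδ, fun h h_pos h_lt ↦ ?_⟩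
  simpa [abs_of_pos h_pos] using hIoo ⟨h_pos, h_lt⟩

section Taylor

variable {E : Type*} [NormedAddCommGroup E] [NormedSpace ℝ E]

theorem isBigO_sub_taylor_of_contDiffAt {f : ℝ → E} {x₀ : ℝ} {n : ℕ} (hf : ContDiffAt ℝ n f x₀) :
    (fun x ↦ f x - ∑ k ∈ Finset.range n, ((x - x₀) ^ k / k.factorial) • iteratedDeriv k f x₀)
      =O[𝓝 x₀] fun x ↦ (x - x₀) ^ n := by
  obtain ⟨U, hU, hfU⟩ := hf.contDiffOn le_rfl (by simp)
  obtain ⟨r, hr, hrU⟩ := Metric.mem_nhds_iff.1 hU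
  have hx₀ : x₀ ∈ Metric.ball x₀ r := Metric.mem_ball_self hr
  have remainder := (taylor_isLittleO (convex_ball x₀ r) hx₀ (hfU.mono hrU)).isBigO
  rw [Metric.isOpen_ball.nhdsWithin_eq hx₀] at remainder
  have last_term : (fun x ↦ ((x - x₀) ^ n / n.factorial) • iteratedDeriv n f x₀)
      =O[𝓝 x₀] fun x ↦ (x - x₀) ^ n := by
    refine .of_bound (‖iteratedDeriv n f x₀‖ / n.factorial) (.of_forall fun x ↦ le_of_eq ?_)
    rw [norm_smul, norm_div, RCLike.norm_natCast]
    ring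
  refine (remainder.add last_term).congr_left fun x ↦ ?_
  simp only [taylor_within_apply, Finset.sum_range_succ _ n,
    iteratedDerivWithin_of_isOpen Metric.isOpen_ball hx₀, div_eq_inv_mul]
  abel

theorem contDiffAt_comp_mul_left_zero {f : ℝ → E} {n : WithTop ℕ∞} (hf : ContDiffAt ℝ n f 0)
    (c : ℝ) : ContDiffAt ℝ n (fun t ↦ f (c * t)) 0 :=
  ContDiffAt.comp (0 : ℝ) (by simpa using hf) (by fun_prop)

theorem iteratedDeriv_comp_mul_left (n : ℕ) (f : ℝ → E) (c x : ℝ) :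
    iteratedDeriv n (fun t ↦ f (c * t)) x = c ^ n • iteratedDeriv n f (c * x) := by
  induction n generalizing x with
  | zero => simp
  | succ n ih =>
    rw [iteratedDeriv_succ, funext ih, deriv_fun_const_smul_field,
      deriv_comp_mul_left c (iteratedDeriv n f), ← iteratedDeriv_succ, smul_smul, ← pow_succ]

theorem isBigO_nhdsNE_of_pow_smul {f : ℝ → E} {m n : ℕ}
    (hf : (fun h ↦ h ^ m • f h) =O[𝓝[≠] 0] fun h ↦ h ^ (m + n)) :
    f =O[𝓝[≠] 0] fun h ↦ h ^ n := by
  refine ((isBigO_refl (fun h : ℝ ↦ (h ^ m)⁻¹) _).smul hf).congr' ?_ ?_ <;>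
    filter_upwards [self_mem_nhdsWithin] with h (hh : h ≠ 0)
  · exact inv_smul_smul₀ (pow_ne_zero m hh) _
  · rw [smul_eq_mul, pow_add, inv_mul_cancel_left₀ (pow_ne_zero m hh)]

end Taylor

section BilinearStencil

variable {ι κ : Type*} [Fintype ι] [Fintype κ] {𝔸 : Type*} [NormedRing 𝔸] [NormedAlgebra ℝ 𝔸]

/-- The bilinear finite-difference expression `∑ᵢⱼ Wᵢⱼ a(αᵢ h) g(βⱼ h)` at step `h`, before
division by a power of `h`. The nodes `α`, `β` are given in units of `h`. -/
def bilinearStencil (W : Matrix ι κ ℝ) (α : ι → ℝ) (β : κ → ℝ) (a g : ℝ → 𝔸) (h : ℝ) : 𝔸 :=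
  ∑ i, ∑ j, W i j • (a (α i * h) * g (β j * h))

/-- The moment of order `(m, n)` of the weights `W` at the nodes `α`, `β`, which governs the
contribution of `a⁽ᵐ⁾ g⁽ⁿ⁾` to `bilinearStencil W α β a g`. -/
def stencilMoment (W : Matrix ι κ ℝ) (α : ι → ℝ) (β : κ → ℝ) (m n : ℕ) : ℝ :=
  ∑ i, ∑ j, W i j * (α i ^ m * β j ^ n)

variable (W : Matrix ι κ ℝ) (α : ι → ℝ) (β : κ → ℝ) {a g : ℝ → 𝔸} {n : ℕ}

theorem contDiffAt_smul_mul_comp_mul_left_zero (ha : ContDiffAt ℝ n a 0) (hg : ContDiffAt ℝ n g 0)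
    (w c d : ℝ) : ContDiffAt ℝ n (fun h ↦ w • (a (c * h) * g (d * h))) 0 :=
  ((contDiffAt_comp_mul_left_zero ha c).mul (contDiffAt_comp_mul_left_zero hg d)).const_smul w

theorem contDiffAt_bilinearStencil (ha : ContDiffAt ℝ n a 0) (hg : ContDiffAt ℝ n g 0) :
    ContDiffAt ℝ n (bilinearStencil W α β a g) 0 :=
  ContDiffAt.sum fun i _ ↦ ContDiffAt.sum fun j _ ↦
    contDiffAt_smul_mul_comp_mul_left_zero ha hg (W i j) (α i) (β j)

theorem iteratedDeriv_mul_comp_mul_left_zero (ha : ContDiffAt ℝ n a 0) (hg : ContDiffAt ℝ n g 0)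
    (c d : ℝ) :
    iteratedDeriv n (fun h ↦ a (c * h) * g (d * h)) 0 = ∑ m ∈ Finset.range (n + 1),
      (c ^ m * d ^ (n - m)) •
        ((n.choose m : 𝔸) * iteratedDeriv m a 0 * iteratedDeriv (n - m) g 0) := by
  refine (iteratedDeriv_mul (contDiffAt_comp_mul_left_zero ha c)
    (contDiffAt_comp_mul_left_zero hg d)).trans (Finset.sum_congr rfl fun m _ ↦ ?_)
  simp only [iteratedDeriv_comp_mul_left, mul_zero, mul_smul_comm, smul_mul_assoc, smul_smul]
  rw [mul_comm]

theorem iteratedDeriv_bilinearStencil_zero (ha : ContDiffAt ℝ n a 0) (hg : ContDiffAt ℝ n g 0) :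
    iteratedDeriv n (bilinearStencil W α β a g) 0 = ∑ m ∈ Finset.range (n + 1),
      stencilMoment W α β m (n - m) •
        ((n.choose m : 𝔸) * iteratedDeriv m a 0 * iteratedDeriv (n - m) g 0) := by
  have term_contDiffAt (i : ι) (j : κ) :
      ContDiffAt ℝ n (fun h ↦ W i j • (a (α i * h) * g (β j * h))) 0 :=
    contDiffAt_smul_mul_comp_mul_left_zero ha hg (W i j) (α i) (β j)
  calc iteratedDeriv n (bilinearStencil W α β a g) 0
      = ∑ i, ∑ j, W i j • iteratedDeriv n (fun h ↦ a (α i * h) * g (β j * h)) 0 := by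
        unfold bilinearStencil
        rw [iteratedDeriv_fun_sum fun i _ ↦ ContDiffAt.sum fun j _ ↦ term_contDiffAt i j]
        simp only [iteratedDeriv_fun_sum fun j _ ↦ term_contDiffAt _ j,
          iteratedDeriv_fun_const_smul_field]
    _ = _ := by
        simp only [iteratedDeriv_mul_comp_mul_left_zero ha hg, stencilMoment, Finset.smul_sum,
          Finset.sum_smul, smul_smul]
        rw [Finset.sum_comm_cycle]

theorem bilinearStencil_taylor (ha : ContDiffAt ℝ n a 0) (hg : ContDiffAt ℝ n g 0) :
    (fun h ↦ bilinearStencil W α β a g h - ∑ k ∈ Finset.range n, (h ^ k / k.factorial) •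
      ∑ m ∈ Finset.range (k + 1), stencilMoment W α β m (k - m) •
        ((k.choose m : 𝔸) * iteratedDeriv m a 0 * iteratedDeriv (k - m) g 0))
      =O[𝓝 0] fun h ↦ h ^ n := by
  have taylor := isBigO_sub_taylor_of_contDiffAt (contDiffAt_bilinearStencil W α β ha hg)
  simp only [sub_zero] at taylor
  refine taylor.congr_left fun h ↦ congrArg _ (Finset.sum_congr rfl fun k hk ↦ ?_)
  have k_le : (k : WithTop ℕ∞) ≤ n := mod_cast (Finset.mem_range.1 hk).le
  rw [iteratedDeriv_bilinearStencil_zero W α β (ha.of_le k_le) (hg.of_le k_le)]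

end BilinearStencil

section FluxStencil

/-- The weights of `fluxStencil`: row `i` holds the finite-difference approximation of `h g'` at
`fluxNodes i`, scaled by the weight of that node in the outer staggered difference. -/
def fluxWeights : Matrix (Fin 4) (Fin 5) ℝ :=
  Matrix.diagonal (![1/24, -9/8, 9/8, -1/24] : Fin 4 → ℝ) *
    (!![-11/12, 17/24, 3/8, -5/24, 1/24;
        1/24, -9/8, 9/8, -1/24, 0;
        0, 1/24, -9/8, 9/8, -1/24;
        -1/24, 5/24, -3/8, -17/24, 11/12] : Matrix (Fin 4) (Fin 5) ℝ)

/-- The staggered nodes, in units of `h`, at which `fluxStencil` samples the coefficient. -/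
def fluxNodes : Fin 4 → ℝ := ![-3/2, -1/2, 1/2, 3/2]

/-- The nodes, in units of `h`, at which `fluxStencil` samples the differentiated function. -/
def gridNodes : Fin 5 → ℝ := ![-2, -1, 0, 1, 2]

theorem fluxStencil_eq_bilinearStencil (a g : ℝ → ℂ) (h : ℝ) :
    fluxStencil (a (-3/2 * h)) (a (-1/2 * h)) (a (1/2 * h)) (a (3/2 * h))
      (g (-2 * h)) (g (-1 * h)) (g (0 * h)) (g (1 * h)) (g (2 * h)) h
      = (1 / (h : ℂ) ^ 2) * bilinearStencil fluxWeights fluxNodes gridNodes a g h := by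
  simp only [fluxStencil, bilinearStencil, fluxWeights, fluxNodes, gridNodes, Matrix.diagonal_mul,
    Fin.sum_univ_four, Fin.sum_univ_five, Matrix.of_apply, Matrix.cons_val, Complex.real_smul]
  push_cast
  ring

theorem stencilMoment_fluxWeights {m n : ℕ} (hmn : m + n < 6) :
    stencilMoment fluxWeights fluxNodes gridNodes m n =
      if (m, n) = (1, 1) then 1 else if (m, n) = (0, 2) then 2 else 0 := by
  have hm : m < 6 := by lia
  have hn : n < 6 := by lia
  interval_cases m <;> interval_cases n <;> first
    | lia
    | norm_num [stencilMoment, fluxWeights, fluxNodes, gridNodes, Matrix.diagonal_mul,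
        Fin.sum_univ_succ]

variable {𝔸 : Type*} [NormedRing 𝔸] [NormedAlgebra ℝ 𝔸]

theorem sum_stencilMoment_fluxWeights (a g : ℝ → 𝔸) {k : ℕ} (hk : k < 6) :
    ∑ m ∈ Finset.range (k + 1), stencilMoment fluxWeights fluxNodes gridNodes m (k - m) •
        ((k.choose m : 𝔸) * iteratedDeriv m a 0 * iteratedDeriv (k - m) g 0) =
      if k = 2 then (2 : ℝ) • (deriv a 0 * deriv g 0 + a 0 * iteratedDeriv 2 g 0) else 0 := by
  interval_cases k <;> simp [Finset.sum_range_succ, stencilMoment_fluxWeights, two_smul, two_mul,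
    add_mul, add_comm]

theorem bilinearStencil_fluxWeights_isBigO {a g : ℝ → 𝔸}
    (ha : ContDiffAt ℝ 6 a 0) (hg : ContDiffAt ℝ 6 g 0) :
    (fun h : ℝ ↦ bilinearStencil fluxWeights fluxNodes gridNodes a g h -
      h ^ 2 • (deriv a 0 * deriv g 0 + a 0 * iteratedDeriv 2 g 0)) =O[𝓝 0] fun h ↦ h ^ 6 := by
  refine (bilinearStencil_taylor fluxWeights fluxNodes gridNodes (n := 6) ha hg).congr_left
    fun h ↦ congrArg _ ?_
  rw [Finset.sum_eq_single_of_mem 2 (by simp), sum_stencilMoment_fluxWeights a g (by norm_num),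
    if_pos rfl, smul_smul, Nat.factorial_two, Nat.cast_two, div_mul_cancel₀ _ two_ne_zero]
  intro k hk hk2
  rw [sum_stencilMoment_fluxWeights a g (Finset.mem_range.1 hk), if_neg hk2, smul_zero]

theorem fluxStencil_sub_isBigO {a g : ℝ → ℂ}
    (ha : ContDiffAt ℝ 6 a 0) (hg : ContDiffAt ℝ 6 g 0) :
    (fun h : ℝ ↦ fluxStencil (a (-3/2 * h)) (a (-1/2 * h)) (a (1/2 * h)) (a (3/2 * h))
        (g (-2 * h)) (g (-1 * h)) (g (0 * h)) (g (1 * h)) (g (2 * h)) h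
      - (deriv a 0 * deriv g 0 + a 0 * iteratedDeriv 2 g 0)) =O[𝓝[≠] 0] fun h ↦ h ^ 4 := by
  refine isBigO_nhdsNE_of_pow_smul (m := 2)
    (((bilinearStencil_fluxWeights_isBigO ha hg).mono nhdsWithin_le_nhds).congr' ?_ .rfl)
  filter_upwards [self_mem_nhdsWithin] with h (hh : h ≠ 0)
  have hh' : (h : ℂ) ≠ 0 := mod_cast hh
  rw [fluxStencil_eq_bilinearStencil, smul_sub, Complex.real_smul, Complex.real_smul,
    Complex.ofReal_pow, ← mul_assoc, mul_one_div_cancel (pow_ne_zero 2 hh'), one_mul]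

end FluxStencil

section WeightedCurve

variable {E F : Type*} [NormedAddCommGroup E] [NormedSpace ℝ E] [NormedAddCommGroup F]
  [NormedSpace ℝ F]

theorem contDiffAt_comp_add_smul {f : E → F} {p : E} {n : WithTop ℕ∞} (hf : ContDiffAt ℝ n f p)
    (v : E) : ContDiffAt ℝ n (fun t : ℝ ↦ f (p + t • v)) 0 :=
  ContDiffAt.comp (0 : ℝ) (by simpa using hf) (by fun_prop)

theorem iteratedDeriv_comp_add_smul {f : E → F} {p v : E} {t : ℝ} {n : ℕ}
    (hf : ContDiffAt ℝ n f (p + t • v)) :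
    iteratedDeriv n (fun s : ℝ ↦ f (p + s • v)) t =
      iteratedFDeriv ℝ n f (p + t • v) fun _ ↦ v := by
  induction n generalizing t with
  | zero => simp
  | succ n ih =>
    have line_continuousAt : ContinuousAt (fun s : ℝ ↦ p + s • v) t := by fun_prop
    have hf_near : ∀ᶠ s in 𝓝 t, ContDiffAt ℝ n f (p + s • v) :=
      line_continuousAt.eventually ((hf.of_le (mod_cast n.le_succ)).eventually (by simp))
    have ih_near : iteratedDeriv n (fun s : ℝ ↦ f (p + s • v)) =ᶠ[𝓝 t]
        fun s ↦ iteratedFDeriv ℝ n f (p + s • v) fun _ ↦ v :=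
      hf_near.mono fun s hs ↦ ih hs
    rw [iteratedDeriv_succ, ih_near.deriv_eq, hf.deriv_fderiv_add_smul]

/-- The curve `t ↦ û` whose values at `-2h, -h, 0, h, 2h` are the point-weighted values of the
scheme: the column offset is `t` and the vertical half-width `γ t`. -/
def weightedCurve (b₁ γ : ℝ) (u : ℝ × ℝ → ℂ) (x z t : ℝ) : ℂ :=
  hatVal b₁ u (x + t) x z (γ * t)

theorem hatVal_neg_halfWidth (b₁ : ℝ) (u : ℝ × ℝ → ℂ) (xo xc z s : ℝ) :
    hatVal b₁ u xo xc z (-s) = hatVal b₁ u xo xc z s := by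
  simp only [hatVal, sub_neg_eq_add, ← sub_eq_add_neg]
  ring

theorem weightedCurve_zero (b₁ γ : ℝ) (u : ℝ × ℝ → ℂ) (x z : ℝ) :
    weightedCurve b₁ γ u x z 0 = b₁ * u (x, z) := by
  simp [weightedCurve, hatVal]

theorem LxTilde_eq_fluxStencil_weightedCurve (b₁ γ : ℝ) (A u : ℝ × ℝ → ℂ) (x z h : ℝ) :
    LxTilde b₁ γ A u x z h =
      fluxStencil (A (x + -3/2 * h, z)) (A (x + -1/2 * h, z)) (A (x + 1/2 * h, z))
        (A (x + 3/2 * h, z)) (weightedCurve b₁ γ u x z (-2 * h)) (weightedCurve b₁ γ u x z (-1 * h))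
        (weightedCurve b₁ γ u x z (0 * h)) (weightedCurve b₁ γ u x z (1 * h))
        (weightedCurve b₁ γ u x z (2 * h)) h := by
  rw [zero_mul, weightedCurve_zero]
  unfold LxTilde weightedCurve
  rw [← hatVal_neg_halfWidth b₁ u (x - 2 * h), ← hatVal_neg_halfWidth b₁ u (x - h)]
  ring_nf

variable (b₁ γ : ℝ) {u : ℝ × ℝ → ℂ} {x z : ℝ}

theorem weightedCurve_eq_sum_lines :
    weightedCurve b₁ γ u x z = fun t : ℝ ↦ (b₁ : ℂ) * u ((x, z) + t • (1, 0)) +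
      ((1 : ℂ) - b₁) / 2 * (u ((x, z) + t • ((1, 0) + (0, γ))) + u ((x, z) + t • ((1, 0) - (0, γ)))
        - u ((x, z) + t • -(0, γ)) - u ((x, z) + t • (0, γ))) := by
  ext t
  simp [weightedCurve, hatVal, mul_comm γ t, sub_eq_add_neg]

theorem contDiffAt_weightedCurve {n : WithTop ℕ∞} (hu : ContDiffAt ℝ n u (x, z)) :
    ContDiffAt ℝ n (weightedCurve b₁ γ u x z) 0 := by
  have line := contDiffAt_comp_add_smul hu
  rw [weightedCurve_eq_sum_lines]
  exact (contDiffAt_const.mul (line _)).add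
    (contDiffAt_const.mul ((((line _).add (line _)).sub (line _)).sub (line _)))

theorem iteratedDeriv_weightedCurve {n : ℕ} (hu : ContDiffAt ℝ n u (x, z)) :
    iteratedDeriv n (weightedCurve b₁ γ u x z) 0 =
      (b₁ : ℂ) * iteratedDeriv n (fun t : ℝ ↦ u ((x, z) + t • (1, 0))) 0 +
      ((1 : ℂ) - b₁) / 2 * (iteratedDeriv n (fun t : ℝ ↦ u ((x, z) + t • ((1, 0) + (0, γ)))) 0
        + iteratedDeriv n (fun t : ℝ ↦ u ((x, z) + t • ((1, 0) - (0, γ)))) 0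
        - iteratedDeriv n (fun t : ℝ ↦ u ((x, z) + t • -(0, γ))) 0
        - iteratedDeriv n (fun t : ℝ ↦ u ((x, z) + t • (0, γ))) 0) := by
  have line := contDiffAt_comp_add_smul hu
  rw [weightedCurve_eq_sum_lines, iteratedDeriv_fun_add (contDiffAt_const.mul (line _))
    (contDiffAt_const.mul ((((line _).add (line _)).sub (line _)).sub (line _))),
    iteratedDeriv_const_mul_field, iteratedDeriv_const_mul_field,
    iteratedDeriv_fun_sub (((line _).add (line _)).sub (line _)) (line _),
    iteratedDeriv_fun_sub ((line _).add (line _)) (line _),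
    iteratedDeriv_fun_add (line _) (line _)]

theorem iteratedDeriv_comp_add_smul_one_zero (n : ℕ) (f : ℝ × ℝ → F) (x z : ℝ) :
    iteratedDeriv n (fun t : ℝ ↦ f ((x, z) + t • (1, 0))) 0 =
      iteratedDeriv n (fun s ↦ f (s, z)) x := by
  simpa using congrFun (iteratedDeriv_comp_const_add n (fun s ↦ f (s, z)) x) 0

theorem deriv_weightedCurve (hu : ContDiffAt ℝ 1 u (x, z)) :
    deriv (weightedCurve b₁ γ u x z) 0 = deriv (fun s ↦ u (s, z)) x := by
  have line_deriv (v : ℝ × ℝ) :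
      iteratedDeriv 1 (fun t : ℝ ↦ u ((x, z) + t • v)) 0 = fderiv ℝ u (x, z) v := by
    rw [iteratedDeriv_comp_add_smul (by simpa using hu), iteratedFDeriv_one_apply, zero_smul,
      add_zero]
  rw [← iteratedDeriv_one, ← iteratedDeriv_one, ← iteratedDeriv_comp_add_smul_one_zero,
    iteratedDeriv_weightedCurve b₁ γ hu]
  simp only [line_deriv, map_add, map_sub, map_neg]
  ring

theorem iteratedDeriv_two_weightedCurve (hu : ContDiffAt ℝ 2 u (x, z)) :
    iteratedDeriv 2 (weightedCurve b₁ γ u x z) 0 = iteratedDeriv 2 (fun s ↦ u (s, z)) x := by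
  have line_deriv_two (v : ℝ × ℝ) :
      iteratedDeriv 2 (fun t : ℝ ↦ u ((x, z) + t • v)) 0 =
        fderiv ℝ (fderiv ℝ u) (x, z) v v := by
    rw [iteratedDeriv_comp_add_smul (by simpa using hu), iteratedFDeriv_two_apply, zero_smul,
      add_zero]
  rw [← iteratedDeriv_comp_add_smul_one_zero, iteratedDeriv_weightedCurve b₁ γ hu]
  simp only [line_deriv_two, map_add, map_sub, map_neg, add_apply, sub_apply, neg_apply]
  ring

end WeightedCurve

theorem deriv_mul_deriv {𝔸 : Type*} [NormedRing 𝔸] [NormedAlgebra ℝ 𝔸] {a g : ℝ → 𝔸} {x : ℝ}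
    (ha : DifferentiableAt ℝ a x) (hg : ContDiffAt ℝ 2 g x) :
    deriv (fun t ↦ a t * deriv g t) x = deriv a x * deriv g x + a x * iteratedDeriv 2 g x := by
  have hg' : DifferentiableAt ℝ (deriv g) x :=
    (hg.derivWithin (m := 1) (by norm_num)).differentiableAt one_ne_zero
  rw [deriv_fun_mul ha hg', iteratedDeriv_succ, iteratedDeriv_one]

theorem LxTilde_fourth_order_general (b₁ γ : ℝ) {A u : ℝ × ℝ → ℂ} {x z : ℝ}
    (hA : ContDiffAt ℝ 6 A (x, z)) (hu : ContDiffAt ℝ 6 u (x, z)) :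
    (fun h ↦ LxTilde b₁ γ A u x z h
      - deriv (fun t ↦ A (t, z) * deriv (fun s ↦ u (s, z)) t) x) =O[𝓝[≠] 0] fun h ↦ h ^ 4 := by
  have hA_row : ContDiffAt ℝ 6 (fun t ↦ A (t, z)) x := hA.comp x (by fun_prop)
  have hu_row : ContDiffAt ℝ 6 (fun t ↦ u (t, z)) x := hu.comp x (by fun_prop)
  have hA_shift : ContDiffAt ℝ 6 (fun t ↦ A (x + t, z)) 0 :=
    ContDiffAt.comp (0 : ℝ) (by simpa using hA) (by fun_prop)
  have deriv_A_shift : deriv (fun t ↦ A (x + t, z)) 0 = deriv (fun t ↦ A (t, z)) x := by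
    simpa using deriv_comp_const_add (fun t ↦ A (t, z)) x 0
  have expansion := fluxStencil_sub_isBigO hA_shift (contDiffAt_weightedCurve b₁ γ hu)
  rw [deriv_A_shift, deriv_weightedCurve b₁ γ (hu.of_le (by norm_num)),
    iteratedDeriv_two_weightedCurve b₁ γ (hu.of_le (by norm_num)), add_zero,
    ← deriv_mul_deriv (hA_row.differentiableAt (by norm_num)) (hu_row.of_le (by norm_num))]
    at expansion
  simpa only [LxTilde_eq_fluxStencil_weightedCurve] using expansion

/-- the x-part of the optimal point-weighting 17-point scheme
approximates ∂/∂x(A ∂u/∂x) with fourth-order accuracy. -/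
theorem LxTilde_fourth_order
    (γ : ℝ) (hγ : 0 < γ) (b₁ : ℝ) (A u : ℝ × ℝ → ℂ)
    (hA : ContDiff ℝ (⊤ : ℕ∞) A) (hu : ContDiff ℝ (⊤ : ℕ∞) u) (x z : ℝ) :
    ∃ C δ : ℝ, 0 < C ∧ 0 < δ ∧ ∀ h : ℝ, 0 < h → h < δ →
      ‖LxTilde b₁ γ A u x z h
        - deriv (fun t => A (t, z) * deriv (fun s => u (s, z)) t) x‖ ≤ C * h ^ 4 := by
  have error_isBigO := LxTilde_fourth_order_general b₁ γ (x := x) (z := z)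
    (contDiff_infty.1 hA 6).contDiffAt (contDiff_infty.1 hu 6).contDiffAt
  exact exists_bound_Ioo_of_isBigO_pow (error_isBigO.mono (nhdsGT_le_nhdsNE 0))

end
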